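/- Suppose at a point p the fiberwise quadratic forms satisfy Σ_{i=1}^{2n} a_i · h_{β_i}(y) = h_{α_1}(y) for all y in the fiber, for some constants a_i ∈ ℝ, where h_γ(y) = Σ_{j=1}^{2n}(y_γ^j)² in the flat coordinates of chart U_γ. Then the local index ν_p defined by the limit (0.1) vanishes: ν_p = 0. -/

import Mathlib

open Filter MeasureTheory Real

lemma aux_temperate_prod {E ι : Type*} [NormedAddCommGroup E] [NormedSpace ℝ E]
    (s : Finset ι) (f : ι → E → ℝ) (hf : ∀ i, (f i).HasTemperateGrowth) :
    Function.HasTemperateGrowth (fun y => ∏ i ∈ s, f i y) := by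
  classical
  induction s using Finset.induction_on with
  | empty => simpa using Function.HasTemperateGrowth.const (1 : ℝ)
  | insert a s has ih =>
    simp only [Finset.prod_insert has]
    exact (hf a).fun_mul ih

lemma aux_temperate_det {E : Type*} [NormedAddCommGroup E] [NormedSpace ℝ E] {N : ℕ}
    (M : E → Matrix (Fin N) (Fin N) ℝ)
    (hM : ∀ i j, Function.HasTemperateGrowth (fun y => M y i j)) :
    Function.HasTemperateGrowth (fun y => (M y).det) := by
  simp only [Matrix.det_apply']
  refine Function.HasTemperateGrowth.sum fun σ _ => ?_
  exact (Function.HasTemperateGrowth.const _).fun_mul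
    (aux_temperate_prod _ _ fun i => hM (σ i) i)

lemma aux_integrable {N : ℕ} (f Q : EuclideanSpace ℝ (Fin N) → ℝ)
    (hf : f.HasTemperateGrowth) (hQ : Continuous Q) (c : ℝ) (hc : 0 < c)
    (hcQ : ∀ y, c * ‖y‖ ^ 2 ≤ Q y) :
    Integrable (fun y => f y * Real.exp (-Q y)) := by
  obtain ⟨k, C, hC⟩ := hf.2 0
  simp only [norm_iteratedFDeriv_zero] at hC
  have hC0 : 0 ≤ C := by
    have := (norm_nonneg _).trans (hC 0)
    simpa using this
  have hg : Integrable (fun y : EuclideanSpace ℝ (Fin N) => Real.exp (-(c/2) * ‖y‖ ^ 2)) := by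
    have := (GaussianFourier.integrable_cexp_neg_mul_sq_norm_add
      (V := EuclideanSpace ℝ (Fin N)) (b := ((c/2 : ℝ) : ℂ)) (by simpa using hc) 0 0).re
    refine this.congr (Filter.Eventually.of_forall fun y => ?_)
    have : (-((c/2 : ℝ) : ℂ) * (‖y‖ : ℂ) ^ 2 + 0 * ((inner ℝ (0 : EuclideanSpace ℝ (Fin N)) y : ℝ) : ℂ))
        = ((-(c/2) * ‖y‖ ^ 2 : ℝ) : ℂ) := by
      push_cast; ring
    simp only []
    rw [this]
    exact Complex.exp_ofReal_re _
  refine (hg.const_mul (C * (k.factorial * Real.exp (1 + 1 / (2 * c))))).mono'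
    ((hf.1.continuous.mul (by fun_prop)).aestronglyMeasurable)
    (Filter.Eventually.of_forall fun y => ?_)
  have h1 : (1 + ‖y‖) ^ k ≤ k.factorial * Real.exp (1 + ‖y‖) := by
    have := Real.pow_div_factorial_le_exp (x := 1 + ‖y‖) (by positivity) k
    rwa [div_le_iff₀' (by positivity)] at this
  have h2 : ‖y‖ ≤ c / 2 * ‖y‖ ^ 2 + 1 / (2 * c) := by
    have : c / 2 * ‖y‖ ^ 2 + 1 / (2 * c) - ‖y‖ = (c * ‖y‖ - 1) ^ 2 / (2 * c) := by
      field_simp; ring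
    have h3 : 0 ≤ (c * ‖y‖ - 1) ^ 2 / (2 * c) := by positivity
    linarith
  rw [norm_mul, Real.norm_of_nonneg (Real.exp_pos _).le]
  calc ‖f y‖ * Real.exp (-Q y)
      ≤ (C * (k.factorial * Real.exp (1 + ‖y‖))) * Real.exp (-(c * ‖y‖ ^ 2)) := by
        gcongr
        · exact (hC y).trans (by gcongr)
        · exact hcQ y
    _ = C * k.factorial * Real.exp (1 + ‖y‖ - c * ‖y‖ ^ 2) := by
        rw [sub_eq_add_neg, Real.exp_add (1 + ‖y‖)]; ring
    _ ≤ C * k.factorial * Real.exp ((1 + 1 / (2 * c)) + (-(c/2) * ‖y‖ ^ 2)) := by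
        gcongr
        linarith
    _ = _ := by rw [Real.exp_add]; ring

/-- symmetric paired with alternating is zero -/
lemma aux_alt {N : ℕ} (R : Fin N → Fin N → ℝ) (i k : Fin N) (hik : i ≠ k)
    (A : Fin N → Fin N → ℝ) (hA : ∀ j l, A j l = A l j) :
    ∑ j, Matrix.det (Function.update (Function.update R k (Pi.single j 1)) i (A j)) = 0 := by
  have hexp : ∀ j, Matrix.det (Function.update (Function.update R k (Pi.single j 1)) i (A j))
      = ∑ l, A j l *
        Matrix.det (Function.update (Function.update R k (Pi.single j 1)) i (Pi.single l 1)) := by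
    intro j
    have h1 : A j = ∑ l, A j l • (Pi.single l (1:ℝ) : Fin N → ℝ) := by
      ext m; simp [Finset.sum_apply, Pi.single_apply]
    conv_lhs => rw [h1]
    have := (Matrix.detRowAlternating (R := ℝ) (n := Fin N)).toMultilinearMap.map_update_sum
      Finset.univ i (fun l => A j l • (Pi.single l (1:ℝ) : Fin N → ℝ))
      (Function.update R k (Pi.single j 1))
    refine this.trans (Finset.sum_congr rfl fun l _ => ?_)
    exact (Matrix.detRowAlternating (R := ℝ) (n := Fin N)).toMultilinearMap.map_update_smul _ _ _ _
  simp only [hexp]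
  have hsw : ∀ j l,
      Matrix.det (Function.update (Function.update R k (Pi.single j (1:ℝ))) i (Pi.single l 1))
      = - Matrix.det (Function.update (Function.update R k (Pi.single l (1:ℝ))) i (Pi.single j 1)) := by
    intro j l
    have := (Matrix.detRowAlternating (R := ℝ) (n := Fin N)).map_swap
      (Function.update (Function.update R k (Pi.single l (1:ℝ))) i (Pi.single j 1)) hik
    refine Eq.trans ?_ this
    refine congrArg Matrix.det ?_
    funext m
    by_cases hm : m = i
    · subst hm; simp [Function.update_of_ne hik.symm]
    · by_cases hm2 : m = k
      · subst hm2; simp [Function.update_of_ne hik.symm]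
      · simp [Equiv.swap_apply_of_ne_of_ne hm hm2, Function.update_of_ne hm,
          Function.update_of_ne hm2]
  have hS : ∑ j, ∑ l, A j l *
        Matrix.det (Function.update (Function.update R k (Pi.single j 1)) i (Pi.single l 1))
      = - ∑ j, ∑ l, A j l *
        Matrix.det (Function.update (Function.update R k (Pi.single j 1)) i (Pi.single l 1)) := by
    conv_lhs => rw [Finset.sum_comm]
    rw [← Finset.sum_neg_distrib]
    refine Finset.sum_congr rfl fun j _ => ?_
    rw [← Finset.sum_neg_distrib]
    refine Finset.sum_congr rfl fun l _ => ?_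
    rw [hA l j, hsw l j]; ring
  linarith

/-- the determinant as a continuous multilinear map of the rows -/
noncomputable def auxDet (N : ℕ) :
    ContinuousMultilinearMap ℝ (fun _ : Fin N => (Fin N → ℝ)) ℝ :=
  { (Matrix.detRowAlternating (R := ℝ) (n := Fin N)).toMultilinearMap with
    cont := Continuous.matrix_det (A := fun M : Matrix (Fin N) (Fin N) ℝ => M) continuous_id }

lemma auxDet_apply {N : ℕ} (M : Fin N → Fin N → ℝ) : auxDet N M = Matrix.det M := rfl

lemma aux_main {N : ℕ} (G : Fin N → EuclideanSpace ℝ (Fin N) →L[ℝ] (Fin N → ℝ))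
    (hG : ∀ i j l, G i (EuclideanSpace.single j 1) l = G i (EuclideanSpace.single l 1) j)
    (Q : EuclideanSpace ℝ (Fin N) → ℝ) (hQ : Differentiable ℝ Q)
    (w : Fin N → ℝ) (k : Fin N) (hk : w k ≠ 0)
    (hQG : ∀ y j, fderiv ℝ Q y (EuclideanSpace.single j 1) = ∑ i, w i * G i y j)
    (c : ℝ) (hc : 0 < c) (hcQ : ∀ y, c * ‖y‖ ^ 2 ≤ Q y) :
    ∫ y, Matrix.det (fun i j => G i y j) * Real.exp (-Q y) = 0 := by
  -- entries
  have hGt : ∀ i j, Function.HasTemperateGrowth (fun y => G i y j) := fun i j =>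
    ((ContinuousLinearMap.proj (R := ℝ) (φ := fun _ : Fin N => ℝ) j).comp (G i)).hasTemperateGrowth
  -- cofactor functions
  set f : Fin N → EuclideanSpace ℝ (Fin N) → ℝ := fun j y =>
    Matrix.det (Function.update (fun i => G i y) k (Pi.single j 1)) with hf
  set f' : Fin N → EuclideanSpace ℝ (Fin N) → ℝ := fun j y =>
    ∑ i, Matrix.det (Function.update (Function.update (fun i => G i y) k (Pi.single j 1)) i
      (if i = k then 0 else G i (EuclideanSpace.single j 1))) with hf'
  have hupd : ∀ j i m, Function.HasTemperateGrowth
      (fun y => Function.update (fun i => G i y) k (Pi.single j 1) i m) := by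
    intro j i m
    by_cases h : i = k
    · subst h; simpa using Function.HasTemperateGrowth.const _
    · simpa [Function.update_of_ne h] using hGt i m
  have hft : ∀ j, (f j).HasTemperateGrowth := fun j => aux_temperate_det _ (hupd j)
  have hf't : ∀ j, (f' j).HasTemperateGrowth := by
    intro j
    refine Function.HasTemperateGrowth.sum fun i _ => aux_temperate_det _ fun a b => ?_
    by_cases h : a = i
    · subst h; simpa using Function.HasTemperateGrowth.const _
    · simpa [Function.update_of_ne h] using hupd j a b
  have hfd : ∀ j y, fderiv ℝ (f j) y (EuclideanSpace.single j 1) = f' j y := by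
    intro j y
    have h1 : HasFDerivAt (fun y => Function.update (fun i => G i y) k (Pi.single j (1:ℝ)))
        (ContinuousLinearMap.pi fun i => if i = k then 0 else G i) y := by
      rw [hasFDerivAt_pi]
      intro i
      by_cases h : i = k
      · subst h; simpa using hasFDerivAt_const (𝕜 := ℝ) (Pi.single j (1:ℝ) : Fin N → ℝ) y
      · simpa [Function.update_of_ne h, h] using (G i).hasFDerivAt
    have h2 := ((auxDet N).hasFDerivAt
      (Function.update (fun i => G i y) k (Pi.single j (1:ℝ)))).comp y h1
    have h3 : fderiv ℝ (f j) y = _ := h2.fderiv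
    rw [h3, ContinuousLinearMap.comp_apply, ContinuousMultilinearMap.linearDeriv_apply]
    refine Finset.sum_congr rfl fun i _ => ?_
    rw [auxDet_apply]
    congr 2
    by_cases h : i = k <;> simp [h]
  have hsum0 : ∀ y, ∑ j, f' j y = 0 := by
    intro y
    simp only [hf']
    rw [Finset.sum_comm]
    refine Finset.sum_eq_zero fun i _ => ?_
    by_cases h : i = k
    · refine Finset.sum_eq_zero fun j _ => ?_
      apply Matrix.det_eq_zero_of_row_eq_zero i
      intro m; simp [h]
    · simp only [h, if_false]
      exact aux_alt _ i k h (fun j => G i (EuclideanSpace.single j 1)) (fun j l => hG i j l)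
  have hed : ∀ y, HasFDerivAt (fun y => Real.exp (-Q y)) (Real.exp (-Q y) • -(fderiv ℝ Q y)) y :=
    fun y => ((hQ y).hasFDerivAt.neg).exp
  have hgd : ∀ y j, fderiv ℝ (fun y => Real.exp (-Q y)) y (EuclideanSpace.single j 1)
      = -((∑ i, w i * G i y j) * Real.exp (-Q y)) := by
    intro y j
    rw [(hed y).fderiv, ← hQG]
    simp [mul_comm]
  have hdet : ∀ y, w k * Matrix.det (fun i j => G i y j) = ∑ j, f j y * ∑ i, w i * G i y j := by
    intro y
    have e1 : ∀ v : Fin N → ℝ, Matrix.det (Function.update (fun i => G i y) k v)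
        = ∑ j, f j y * v j := by
      intro v
      have h1 : v = ∑ l, v l • (Pi.single l (1:ℝ) : Fin N → ℝ) := by
        ext m; simp [Finset.sum_apply, Pi.single_apply]
      conv_lhs => rw [h1]
      have := (Matrix.detRowAlternating (R := ℝ) (n := Fin N)).toMultilinearMap.map_update_sum
        Finset.univ k (fun l => v l • (Pi.single l (1:ℝ) : Fin N → ℝ)) (fun i => G i y)
      refine this.trans (Finset.sum_congr rfl fun l _ => ?_)
      rw [mul_comm]
      exact (Matrix.detRowAlternating (R := ℝ) (n := Fin N)).toMultilinearMap.map_update_smul _ _ _ _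
    rw [← e1 (fun j => ∑ i, w i * G i y j)]
    have h1 : (fun j => ∑ i, w i * G i y j) = ∑ i, w i • (G i y : Fin N → ℝ) := by
      ext m; simp [Finset.sum_apply]
    rw [h1]
    have := (Matrix.detRowAlternating (R := ℝ) (n := Fin N)).toMultilinearMap.map_update_sum
        Finset.univ k (fun i => w i • (G i y : Fin N → ℝ)) (fun i => G i y)
    refine Eq.symm (this.trans ?_)
    rw [Finset.sum_eq_single k]
    · refine ((Matrix.detRowAlternating (R := ℝ) (n := Fin N)).toMultilinearMap.map_update_smul
        _ _ _ _).trans ?_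
      rw [Function.update_eq_self]; rfl
    · intro i _ hik
      refine ((Matrix.detRowAlternating (R := ℝ) (n := Fin N)).toMultilinearMap.map_update_smul
        _ _ _ _).trans ?_
      have : Matrix.det (Function.update (fun i => G i y) k (G i y)) = 0 :=
        Matrix.det_zero_of_row_eq hik (by simp [Function.update_of_ne hik])
      exact (congrArg (w i • ·) this).trans (smul_zero _)
    · simp
  have hint : ∀ j, ∫ y, f j y * fderiv ℝ (fun y => Real.exp (-Q y)) y (EuclideanSpace.single j 1)
      = - ∫ y, f' j y * Real.exp (-Q y) := by
    intro j
    simp only [← hfd]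
    apply integral_mul_fderiv_eq_neg_fderiv_mul_of_integrable
    · simp only [hfd]
      exact aux_integrable _ Q (hf't j) hQ.continuous c hc hcQ
    · simp only [hgd]
      have : Function.HasTemperateGrowth (fun y => - (f j y * ∑ i, w i * G i y j)) := by
        refine ((hft j).fun_mul (Function.HasTemperateGrowth.sum fun i _ => ?_)).neg
        exact (Function.HasTemperateGrowth.const _).fun_mul (hGt i j)
      refine (aux_integrable _ Q this hQ.continuous c hc hcQ).congr
        (Filter.Eventually.of_forall fun y => ?_)
      simp only []
      ring
    · exact aux_integrable _ Q (hft j) hQ.continuous c hc hcQ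
    · exact fun x _ => (hft j).1.differentiable (by simp) x
    · exact fun x _ => (hed x).differentiableAt
  have hi1 : ∀ j, Integrable
      (fun y => f j y * fderiv ℝ (fun y => Real.exp (-Q y)) y (EuclideanSpace.single j 1)) := by
    intro j
    simp only [hgd]
    have : Function.HasTemperateGrowth (fun y => - (f j y * ∑ i, w i * G i y j)) := by
      refine ((hft j).fun_mul (Function.HasTemperateGrowth.sum fun i _ => ?_)).neg
      exact (Function.HasTemperateGrowth.const _).fun_mul (hGt i j)
    refine (aux_integrable _ Q this hQ.continuous c hc hcQ).congr
      (Filter.Eventually.of_forall fun y => ?_)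
    simp only []
    ring
  have hkey : w k * ∫ y, Matrix.det (fun i j => G i y j) * Real.exp (-Q y) = 0 := by
    rw [← integral_const_mul]
    have e : ∀ y, w k * (Matrix.det (fun i j => G i y j) * Real.exp (-Q y))
        = - ∑ j, f j y * fderiv ℝ (fun y => Real.exp (-Q y)) y (EuclideanSpace.single j 1) := by
      intro y
      rw [← mul_assoc, hdet, Finset.sum_mul, ← Finset.sum_neg_distrib]
      refine Finset.sum_congr rfl fun j _ => ?_
      rw [hgd]; ring
    simp only [e]
    rw [integral_neg, integral_finsetSum _ fun j _ => hi1 j]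
    simp only [hint]
    rw [Finset.sum_neg_distrib, neg_neg, ← integral_finsetSum _ fun j _ =>
      aux_integrable _ Q (hf't j) hQ.continuous c hc hcQ]
    simp [← Finset.sum_mul, hsum0]
  exact (mul_eq_zero.mp hkey).resolve_left hk

/-- Remark after Proposition 0.1: in the local model around a point `p ∈ B₊`, with
fiberwise quadratic forms `h_{β_i}(y) = ‖L_i y‖²` (the flat coordinates of the
chart `U_{β_i}`) and `h_{α_1}(y) = ‖L₀ y‖²`, if there are constants `a_i` with
`Σᵢ a_i h_{β_i} = h_{α_1}` on the fiber, then the local index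
`ν_p = lim_{T→∞} ∫_F φ Π_i (dρ_{β_i} T^{β_i}/(4π) ∧ dh_{β_i})
  exp(-Σᵢ ρ_{β_i} T^{β_i} h_{β_i} - T^{α_1} h_{α_1})`
vanishes.  The `4n`-form is evaluated against the standard orientation as the block
determinant of the horizontal differentials `dρ_{β_i}` and the vertical
differentials `dh_{β_i}`. -/
theorem stmt_18 (n : ℕ) (hn : 1 ≤ n)
    (β : Fin (2 * n) → ℝ) (α : ℝ) (hβmono : StrictAnti β) (hβα : ∀ i, α < β i)
    (p : EuclideanSpace ℝ (Fin (2 * n)))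
    (ρ : Fin (2 * n) → EuclideanSpace ℝ (Fin (2 * n)) → ℝ)
    (hρsmooth : ∀ i, ContDiff ℝ (⊤ : ℕ∞) (ρ i))
    (hρrange : ∀ i x, 0 ≤ ρ i x ∧ ρ i x ≤ 1)
    (L : Fin (2 * n) →
      (EuclideanSpace ℝ (Fin (2 * n)) ≃ₗ[ℝ] EuclideanSpace ℝ (Fin (2 * n))))
    (L₀ : EuclideanSpace ℝ (Fin (2 * n)) ≃ₗ[ℝ] EuclideanSpace ℝ (Fin (2 * n)))
    (h : Fin (2 * n) → EuclideanSpace ℝ (Fin (2 * n)) → ℝ)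
    (hα₁ : EuclideanSpace ℝ (Fin (2 * n)) → ℝ)
    (hh : ∀ i y, h i y = ‖L i y‖ ^ 2) (hhα : ∀ y, hα₁ y = ‖L₀ y‖ ^ 2)
    (a : Fin (2 * n) → ℝ)
    (hrel : ∀ y, ∑ i, a i * h i y = hα₁ y)
    (φ : EuclideanSpace ℝ (Fin (2 * n)) → ℝ)
    (hφsmooth : ContDiff ℝ (⊤ : ℕ∞) φ) (hφsupp : HasCompactSupport φ)
    (hφ1 : ∀ᶠ x in nhds p, φ x = 1) :
    Tendsto (fun T : ℝ =>
        ∫ z : EuclideanSpace ℝ (Fin (2 * n)) × EuclideanSpace ℝ (Fin (2 * n)),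
          φ z.1 * (∏ i, T ^ β i / (4 * π)) *
            (Matrix.fromBlocks
              (Matrix.of fun i j : Fin (2 * n) =>
                fderiv ℝ (ρ i) z.1 (EuclideanSpace.single j 1))
              0 0
              (Matrix.of fun i j : Fin (2 * n) =>
                fderiv ℝ (h i) z.2 (EuclideanSpace.single j 1))).det *
            Real.exp (-(∑ i, ρ i z.1 * T ^ β i * h i z.2) - T ^ α * hα₁ z.2))
      atTop (nhds 0) := by
  -- the fibre integral vanishes identically for T > 0
  have hLd : ∀ i (y : EuclideanSpace ℝ (Fin (2 * n))), HasFDerivAt (h i)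
      ((2 : ℝ) • (innerSL ℝ (L i y)).comp
        ((L i).toContinuousLinearEquiv : EuclideanSpace ℝ (Fin (2 * n)) →L[ℝ] EuclideanSpace ℝ (Fin (2 * n)))) y := by
    intro i y
    have h1 : h i = fun y => ‖((L i).toContinuousLinearEquiv : EuclideanSpace ℝ (Fin (2 * n)) →L[ℝ] EuclideanSpace ℝ (Fin (2 * n))) y‖ ^ 2 := by
      funext y; simpa using hh i y
    rw [h1]
    have := (((L i).toContinuousLinearEquiv : EuclideanSpace ℝ (Fin (2 * n)) →L[ℝ] EuclideanSpace ℝ (Fin (2 * n))).hasFDerivAt (x := y)).norm_sq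
    convert! this using 1
    ext v
    simp
  -- row maps
  let G : Fin (2 * n) → EuclideanSpace ℝ (Fin (2 * n)) →L[ℝ] (Fin (2 * n) → ℝ) := fun i =>
    ContinuousLinearMap.pi fun j =>
      (2 : ℝ) • ((innerSL ℝ (L i (EuclideanSpace.single j 1))).comp
        ((L i).toContinuousLinearEquiv : EuclideanSpace ℝ (Fin (2 * n)) →L[ℝ] EuclideanSpace ℝ (Fin (2 * n))))
  have hGd : ∀ i (y : EuclideanSpace ℝ (Fin (2 * n))) j, fderiv ℝ (h i) y (EuclideanSpace.single j 1) = G i y j := by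
    intro i y j
    rw [(hLd i y).fderiv]
    simp [G, real_inner_comm]
  have hGs : ∀ i j l, G i (EuclideanSpace.single j 1) l = G i (EuclideanSpace.single l 1) j := by
    intro i j l
    simp [G, real_inner_comm]
  obtain ⟨K, hK, hKL⟩ := (L₀ : EuclideanSpace ℝ (Fin (2 * n)) →ₗ[ℝ] EuclideanSpace ℝ (Fin (2 * n))).exists_antilipschitzWith (LinearEquiv.ker L₀)
  have hKL' : ∀ y : EuclideanSpace ℝ (Fin (2 * n)), ‖y‖ ≤ K * ‖L₀ y‖ := by
    intro y
    have := hKL.le_mul_dist y 0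
    simpa using this
  have hfib : ∀ T : ℝ, 0 < T → ∀ x : EuclideanSpace ℝ (Fin (2 * n)),
      ∫ y : EuclideanSpace ℝ (Fin (2 * n)), Matrix.det (fun i j => G i y j) *
        Real.exp (-(∑ i, ρ i x * T ^ β i * h i y + T ^ α * hα₁ y)) = 0 := by
    intro T hT x
    set w : Fin (2 * n) → ℝ := fun i => ρ i x * T ^ β i + T ^ α * a i with hw
    have hQw : ∀ y : EuclideanSpace ℝ (Fin (2 * n)), ∑ i, ρ i x * T ^ β i * h i y + T ^ α * hα₁ y = ∑ i, w i * h i y := by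
      intro y
      rw [← hrel, Finset.mul_sum, ← Finset.sum_add_distrib]
      refine Finset.sum_congr rfl fun i _ => ?_
      simp only [hw]; ring
    have hTα : 0 < T ^ α := Real.rpow_pos_of_pos hT _
    have hKpos : (0 : ℝ) < K := by exact_mod_cast hK
    have hlow : ∀ y : EuclideanSpace ℝ (Fin (2 * n)), T ^ α / (K : ℝ) ^ 2 * ‖y‖ ^ 2 ≤ ∑ i, w i * h i y := by
      intro y
      rw [← hQw]
      have h1 : 0 ≤ ∑ i, ρ i x * T ^ β i * h i y := by
        refine Finset.sum_nonneg fun i _ => ?_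
        have := (hρrange i x).1
        rw [hh]; positivity
      have h2 : T ^ α / (K : ℝ) ^ 2 * ‖y‖ ^ 2 ≤ T ^ α * hα₁ y := by
        rw [hhα, div_mul_eq_mul_div, div_le_iff₀ (by positivity), mul_assoc]
        gcongr
        calc ‖y‖ ^ 2 ≤ (K * ‖L₀ y‖) ^ 2 := by gcongr; exact hKL' y
          _ = _ := by ring
      linarith
    have hwk : ∃ k, w k ≠ 0 := by
      by_contra hcon
      push Not at hcon
      have := hlow (EuclideanSpace.single (⟨0, by omega⟩ : Fin (2 * n)) 1)
      simp only [hcon] at this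
      simp at this
      have h3 : 0 < T ^ α / (K : ℝ) ^ 2 := by positivity
      linarith
    obtain ⟨k, hk⟩ := hwk
    simp only [hQw]
    have hQd : ∀ y : EuclideanSpace ℝ (Fin (2 * n)), HasFDerivAt (fun y => ∑ i, w i * h i y)
        (∑ i, w i • fderiv ℝ (h i) y) y := by
      intro y
      refine HasFDerivAt.fun_sum fun i _ => ?_
      exact ((hLd i y).differentiableAt.hasFDerivAt).const_mul (w i)
    refine aux_main G hGs (fun y => ∑ i, w i * h i y) (fun y => (hQd y).differentiableAt) w k hk
      ?_ (T ^ α / (K : ℝ) ^ 2) (by positivity) hlow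
    intro y j
    rw [(hQd y).fderiv]
    simp [hGd]
  refine tendsto_const_nhds.congr' ?_
  filter_upwards [eventually_gt_atTop (0 : ℝ)] with T hT
  symm
  by_cases hI : Integrable (fun z : EuclideanSpace ℝ (Fin (2 * n)) × EuclideanSpace ℝ (Fin (2 * n)) =>
          φ z.1 * (∏ i, T ^ β i / (4 * π)) *
            (Matrix.fromBlocks
              (Matrix.of fun i j : Fin (2 * n) =>
                fderiv ℝ (ρ i) z.1 (EuclideanSpace.single j 1))
              0 0
              (Matrix.of fun i j : Fin (2 * n) =>
                fderiv ℝ (h i) z.2 (EuclideanSpace.single j 1))).det *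
            Real.exp (-(∑ i, ρ i z.1 * T ^ β i * h i z.2) - T ^ α * hα₁ z.2))
  · rw [Measure.volume_eq_prod] at hI ⊢
    rw [integral_prod _ hI]
    refine (integral_congr_ae (Filter.Eventually.of_forall fun x => ?_)).trans
      (integral_zero (EuclideanSpace ℝ (Fin (2 * n))) ℝ)
    have h0 := hfib T hT x
    simp only [Matrix.det_fromBlocks_zero₂₁, hGd]
    have e : ∀ y : EuclideanSpace ℝ (Fin (2 * n)), φ x * (∏ i, T ^ β i / (4 * π)) *
        ((Matrix.of fun i j : Fin (2 * n) =>
            fderiv ℝ (ρ i) x (EuclideanSpace.single j 1)).det *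
          (Matrix.of fun i j : Fin (2 * n) => G i y j).det) *
        Real.exp (-(∑ i, ρ i x * T ^ β i * h i y) - T ^ α * hα₁ y)
        = (φ x * (∏ i, T ^ β i / (4 * π)) * (Matrix.of fun i j : Fin (2 * n) =>
            fderiv ℝ (ρ i) x (EuclideanSpace.single j 1)).det) *
          (Matrix.det (fun i j => G i y j) *
        Real.exp (-(∑ i, ρ i x * T ^ β i * h i y + T ^ α * hα₁ y))) := by
      intro y
      have e1 : (Matrix.of fun i j : Fin (2 * n) => G i y j).det
        = Matrix.det (fun i j => G i y j) := rfl
      rw [e1, neg_add, ← sub_eq_add_neg]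
      ring
    simp only [e]
    rw [integral_const_mul, h0, mul_zero]
  · exact integral_undef hI
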